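/- Let D be a strong digraph of order n ≥ 2. If n−1 vertices of D have degree at least n and the remaining vertex has degree at least n−1, then D is Hamiltonian. -/

import Mathlib

/-! A digraph on a vertex type `V` is given by its arc relation `A : V → V → Prop`
(this automatically forbids multiple arcs); looplessness is expressed by the
hypothesis `Irreflexive A`. -/

/-- The degree of `x`: its out-degree plus its in-degree. -/
noncomputable def degree {V : Type*} (A : V → V → Prop) (x : V) : ℕ :=
  {y | A x y}.ncard + {y | A y x}.ncard

/-- `degreeIn A x S` is the number of arcs between `x` and vertices of `S`,
in both directions. -/
noncomputable def degreeIn {V : Type*} (A : V → V → Prop) (x : V) (S : Set V) : ℕ :=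
  {y ∈ S | A x y}.ncard + {y ∈ S | A y x}.ncard

/-- `c : Fin m → V` is a directed cycle of length `m` (indices taken mod `m`). -/
def IsCycle {V : Type*} (A : V → V → Prop) {m : ℕ} (c : Fin m → V) : Prop :=
  2 ≤ m ∧ Function.Injective c ∧
    ∀ i : Fin m, A (c i) (c ⟨(i.val + 1) % m, Nat.mod_lt _ i.pos⟩)

/-- `p : Fin m → V` is a directed path on `m` vertices (of length `m - 1`). -/
def IsPath {V : Type*} (A : V → V → Prop) {m : ℕ} (p : Fin m → V) : Prop :=
  Function.Injective p ∧ ∀ (i : Fin m) (h : i.val + 1 < m), A (p i) (p ⟨i.val + 1, h⟩)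

/-- A digraph is Hamiltonian if it has a directed cycle through all of its vertices. -/
def IsHamiltonian {V : Type*} [Fintype V] (A : V → V → Prop) : Prop :=
  ∃ c : Fin (Fintype.card V) → V, IsCycle A c ∧ Function.Surjective c

/-- Reachability by a directed path staying inside the set `S`. -/
def ReachIn {V : Type*} (A : V → V → Prop) (S : Set V) : V → V → Prop :=
  Relation.ReflTransGen (fun u v => u ∈ S ∧ v ∈ S ∧ A u v)

/-- A digraph is strong if every vertex is reachable from every other by a directed path. -/
def IsStrong {V : Type*} (A : V → V → Prop) : Prop :=
  ∀ x y : V, Relation.ReflTransGen A x y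

/-- A digraph is `k`-strong if it has at least `k + 1` vertices and the deletion of
any set of at most `k - 1` vertices leaves a strong digraph. -/
def IsKStrong {V : Type*} [Fintype V] (A : V → V → Prop) (k : ℕ) : Prop :=
  k + 1 ≤ Fintype.card V ∧
    ∀ S : Set V, S.ncard ≤ k - 1 → ∀ x ∈ Sᶜ, ∀ y ∈ Sᶜ, ReachIn A Sᶜ x y

/-!
Meyniel's theorem gives more: it suffices that any two nonadjacent vertices have degree sum at
least `2n - 1`. Following Bondy and Thomassen, take a longest directed cycle `C` and suppose that a
path leaves `C` at `a` and returns at `b ≠ a`, with first outer vertex `v`, the segment of `C`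
strictly between `a` and `b` being as short as possible. Among the paths from `b` to `a` that stay
in the vertex set of `C` and visit all of the other segment, a longest one `m` misses some vertex
`u` of `C`: otherwise `m` and the path through `v` would form a longer cycle. Neither can `u` be
inserted into `m`, nor `v` into the segment from `b` to `a`, and minimality limits the arcs joining
`u` and `v` to all other vertices; hence `u` and `v` are nonadjacent with degree sum at most
`2n - 2`, a contradiction. So no such path exists, and if `C` missed a vertex the same count would
apply to any path that leaves `C` and returns to its starting point.
-/

section Meyniel

open scoped List

variable {V : Type*} {A : V → V → Prop}

section ArcCount

open Classical in
/-- The number of arcs between `x` and `y`, in both directions; degrees are sums of it. -/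
noncomputable def arcCount (A : V → V → Prop) (x y : V) : ℕ :=
  (if A x y then 1 else 0) + (if A y x then 1 else 0)

lemma arcCount_le_two (x y : V) : arcCount A x y ≤ 2 := by
  unfold arcCount
  split_ifs <;> omega

lemma arcCount_comm (x y : V) : arcCount A x y = arcCount A y x :=
  Nat.add_comm _ _

lemma arcCount_eq_zero_iff {x y : V} : arcCount A x y = 0 ↔ ¬ A x y ∧ ¬ A y x := by
  simp [arcCount]

lemma arcCount_self [Std.Irrefl A] (x : V) : arcCount A x x = 0 :=
  arcCount_eq_zero_iff.2 ⟨irrefl x, irrefl x⟩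

lemma degree_eq_sum_arcCount [Fintype V] (x : V) : degree A x = ∑ y, arcCount A x y := by
  classical
  simp [degree, arcCount, Finset.sum_add_distrib, Set.ncard_eq_toFinset_card']

end ArcCount

section Walks

/-- `IsWalk A a p b` says that there is a directed walk from `a` to `b` whose list of interior
vertices is `p`. -/
def IsWalk (A : V → V → Prop) (a : V) (p : List V) (b : V) : Prop :=
  List.IsChain A (a :: (p ++ [b]))

@[simp]
lemma isWalk_nil {a b : V} : IsWalk A a [] b ↔ A a b := by
  simp [IsWalk]

@[simp]
lemma isWalk_cons {a b c : V} {p : List V} : IsWalk A a (c :: p) b ↔ A a c ∧ IsWalk A c p b := by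
  simp [IsWalk]

lemma isWalk_append_cons {a b c : V} {p q : List V} :
    IsWalk A a (p ++ c :: q) b ↔ IsWalk A a p c ∧ IsWalk A c q b := by
  induction p generalizing a with
  | nil => simp
  | cons d p ih => simp [ih, and_assoc]

lemma IsWalk.exists_nodup {a b : V} {p : List V} (h : IsWalk A a p b) :
    ∃ p' ⊆ p, (a :: p').Nodup ∧ IsWalk A a p' b := by
  induction p generalizing a with
  | nil => exact ⟨[], by simp, by simp, h⟩
  | cons c t ih =>
    obtain ⟨hac, hct⟩ := isWalk_cons.1 h
    obtain ⟨t', hsub, hnd, hwalk⟩ := ih hct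
    have hcons : c :: t' ⊆ c :: t := List.cons_subset_cons c hsub
    by_cases ha : a ∈ c :: t'
    · obtain ⟨r, s, hrs⟩ := List.append_of_mem ha
      have hwalk' : IsWalk A a (r ++ a :: s) b := hrs ▸ isWalk_cons.2 ⟨hac, hwalk⟩
      refine ⟨s, fun w hw => hcons ?_, ?_, (isWalk_append_cons.1 hwalk').2⟩
      · simp [hrs, hw]
      · exact (hrs ▸ hnd).of_append_right
    · exact ⟨c :: t', hcons, List.nodup_cons.2 ⟨ha, hnd⟩, isWalk_cons.2 ⟨hac, hwalk⟩⟩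

/-- If `x` fits nowhere, each step `y → z` of the walk accounts for at most one of the arcs `y → x`
and `x → z`, and only `x → a` and `b → x` belong to no step. The induction has to count `x → a`
exactly, because it becomes part of a step when the walk is extended to the left. -/
lemma IsWalk.exists_insert {a b x : V} {p : List V} (h : IsWalk A a p b)
    (hx : p.length + 3 < ((a :: (p ++ [b])).map (arcCount A x)).sum) :
    ∃ p', a :: (p' ++ [b]) ~ x :: a :: (p ++ [b]) ∧ IsWalk A a p' b := by
  classical
  suffices H : ∀ {a : V}, IsWalk A a p b →
      p.length + 2 + (if A x a then 1 else 0) < ((a :: (p ++ [b])).map (arcCount A x)).sum →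
      ∃ p', a :: (p' ++ [b]) ~ x :: a :: (p ++ [b]) ∧ IsWalk A a p' b by
    refine H h ?_
    split_ifs <;> omega
  clear h hx
  intro a h hx
  induction p generalizing a with
  | nil =>
    have hab : A a x ∧ A x b := by
      simp only [List.nil_append, List.map_cons, List.map_nil, List.sum_cons, List.sum_nil,
        List.length_nil, arcCount] at hx
      by_contra hab
      split_ifs at hx <;> first | omega | tauto
    exact ⟨[x], .swap x a [b], by simpa using hab⟩
  | cons c t ih =>
    obtain ⟨hac, hct⟩ := isWalk_cons.1 h
    by_cases hxc : A a x ∧ A x c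
    · exact ⟨x :: c :: t, .swap x a _, by simpa [hxc] using hct⟩
    · have hlt : t.length + 2 + (if A x c then 1 else 0) <
          ((c :: (t ++ [b])).map (arcCount A x)).sum := by
        rw [List.cons_append, List.map_cons, List.sum_cons] at hx
        generalize ((c :: (t ++ [b])).map (arcCount A x)).sum = s at hx ⊢
        simp only [List.length_cons, arcCount] at hx
        split_ifs at hx ⊢ <;> first | omega | tauto
      obtain ⟨t', hperm, hwalk⟩ := ih hct hlt
      exact ⟨c :: t', (hperm.cons a).trans (.swap x a _), isWalk_cons.2 ⟨hac, hwalk⟩⟩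

lemma exists_arc_leaving {S : Set V} {x y : V} (h : Relation.ReflTransGen A x y)
    (hx : x ∈ S) (hy : y ∉ S) : ∃ a ∈ S, ∃ b ∉ S, A a b := by
  induction h with
  | refl => exact absurd hx hy
  | @tail b c _ hbc ih =>
    by_cases hb : b ∈ S
    · exact ⟨b, hb, c, hy, hbc⟩
    · exact ih hb

lemma exists_isWalk_to {S : Set V} {x y : V} (h : Relation.ReflTransGen A x y)
    (hx : x ∉ S) (hy : y ∈ S) : ∃ b ∈ S, ∃ p, (∀ w ∈ p, w ∉ S) ∧ IsWalk A x p b := by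
  induction h using Relation.ReflTransGen.head_induction_on with
  | refl => exact absurd hy hx
  | @head c d hcd _ ih =>
    by_cases hd : d ∈ S
    · exact ⟨d, hd, [], by simp, by simpa using hcd⟩
    · obtain ⟨b, hb, p, hp, hwalk⟩ := ih hd
      exact ⟨b, hb, d :: p, by simpa [hd] using hp, isWalk_cons.2 ⟨hcd, hwalk⟩⟩

end Walks

section Bypasses

/-- An `S`-bypass: a directed walk from `a` to `b` with at least one interior vertex, all of them
outside `S`. Neither `a ∈ S`, `b ∈ S` nor `a ≠ b` is required. -/
def HasBypass (A : V → V → Prop) (S : Set V) (a b : V) : Prop :=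
  ∃ v p, (∀ w ∈ v :: p, w ∉ S) ∧ IsWalk A a (v :: p) b

lemma IsStrong.exists_hasBypass (hstrong : IsStrong A) {S : Set V} (hS : S.Nonempty)
    (hS' : S ≠ Set.univ) : ∃ a ∈ S, ∃ b ∈ S, HasBypass A S a b := by
  obtain ⟨x, hx⟩ := hS
  obtain ⟨y, hy⟩ := (Set.ne_univ_iff_exists_notMem S).1 hS'
  obtain ⟨a, ha, v, hv, hav⟩ := exists_arc_leaving (hstrong x y) hx hy
  obtain ⟨b, hb, p, hp, hwalk⟩ := exists_isWalk_to (hstrong v x) hv hx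
  exact ⟨a, ha, b, hb, v, p, List.forall_mem_cons.2 ⟨hv, hp⟩, isWalk_cons.2 ⟨hav, hwalk⟩⟩

variable {S : Set V} {a b u v : V} {p : List V}

lemma arcCount_eq_zero_of_not_hasBypass (hS : ∀ w ∈ v :: p, w ∉ S)
    (hwalk : IsWalk A a (v :: p) b) (hau : ¬ HasBypass A S a u) (hub : ¬ HasBypass A S u b) :
    arcCount A u v = 0 := by
  obtain ⟨hav, hvb⟩ := isWalk_cons.1 hwalk
  refine arcCount_eq_zero_iff.2 ⟨fun huv => hub ?_, fun hvu => hau ?_⟩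
  · exact ⟨v, p, hS, isWalk_cons.2 ⟨huv, hvb⟩⟩
  · exact ⟨v, [], by simpa using hS v List.mem_cons_self, by simp [hav, hvu]⟩

lemma arcCount_add_arcCount_le_of_not_hasBypass (hS : ∀ w ∈ v :: p, w ∉ S)
    (hwalk : IsWalk A a (v :: p) b) (hau : ¬ HasBypass A S a u) (hub : ¬ HasBypass A S u b)
    {w : V} (hw : w ∉ S) : arcCount A u w + arcCount A v w ≤ 2 := by
  obtain ⟨hav, hvb⟩ := isWalk_cons.1 hwalk
  have hv : v ∉ S := hS v List.mem_cons_self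
  have huwv : ¬ (A u w ∧ A w v) := fun h =>
    hub ⟨w, v :: p, List.forall_mem_cons.2 ⟨hw, hS⟩, by simp [h, hvb]⟩
  have hvwu : ¬ (A v w ∧ A w u) := fun h =>
    hau ⟨v, [w], by simp [hv, hw], by simp [h, hav]⟩
  unfold arcCount
  split_ifs <;> first | omega | tauto

end Bypasses

section MeynielCondition

variable [Fintype V]

/-- Meyniel's degree condition: any two nonadjacent vertices of a digraph of order `n` have degree
sum at least `2n - 1`. -/
def MeynielCondition (A : V → V → Prop) : Prop :=
  ∀ u v, u ≠ v → ¬ A u v → ¬ A v u → 2 * Fintype.card V ≤ degree A u + degree A v + 1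

lemma MeynielCondition.of_card_le_degree {z : V}
    (hdeg : ∀ v, v ≠ z → Fintype.card V ≤ degree A v) (hz : Fintype.card V - 1 ≤ degree A z) :
    MeynielCondition A := by
  intro u v huv _ _
  rcases eq_or_ne u z with rfl | hu
  · have := hdeg v huv.symm
    omega
  · have := hdeg u hu
    rcases eq_or_ne v z with rfl | hv
    · omega
    · have := hdeg v hv
      omega

lemma MeynielCondition.lt_sum_arcCount [Std.Irrefl A] (h : MeynielCondition A)
    {W : Finset V} {u v : V} (huv : u ≠ v) (huvW : ∀ w ∈ W, w ≠ u ∧ w ≠ v)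
    (hnonadj : arcCount A u v = 0) (hle : ∀ w ∉ W, arcCount A u w + arcCount A v w ≤ 2) :
    2 * W.card + 2 < ∑ w ∈ W, (arcCount A u w + arcCount A v w) := by
  classical
  obtain ⟨hAuv, hAvu⟩ := arcCount_eq_zero_iff.1 hnonadj
  have hdisj : Disjoint W {u, v} := by
    rw [Finset.disjoint_left]
    intro w hw
    simpa using huvW w hw
  have hpair : ∑ w ∈ {u, v}, (arcCount A u w + arcCount A v w) = 0 := by
    rw [Finset.sum_pair huv, arcCount_self, arcCount_self, arcCount_comm v u, hnonadj]
  have hrest : ∑ w ∈ (W ∪ {u, v})ᶜ, (arcCount A u w + arcCount A v w) ≤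
      (W ∪ {u, v})ᶜ.card * 2 :=
    Finset.sum_le_card_nsmul _ _ _ fun w hw => hle w fun hwW => by simp [hwW] at hw
  have hcard : W.card + 2 + (W ∪ {u, v})ᶜ.card = Fintype.card V := by
    rw [← Finset.card_pair huv, ← Finset.card_union_of_disjoint hdisj, Finset.card_add_card_compl]
  have hdeg : degree A u + degree A v =
      ∑ w ∈ W, (arcCount A u w + arcCount A v w) +
        ∑ w ∈ (W ∪ {u, v})ᶜ, (arcCount A u w + arcCount A v w) := by
    rw [degree_eq_sum_arcCount, degree_eq_sum_arcCount, ← Finset.sum_add_distrib,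
      ← Finset.sum_add_sum_compl (W ∪ {u, v}), Finset.sum_union hdisj, hpair, add_zero]
  have := h u v huv hAuv hAvu
  omega

lemma MeynielCondition.lt_sum_arcCount_of_not_hasBypass [Std.Irrefl A]
    (h : MeynielCondition A) {S : Set V} {W : Finset V} (hWS : ∀ w ∈ W, w ∈ S) {a b u v : V}
    {p : List V} (hp : ∀ w ∈ v :: p, w ∉ S) (hwalk : IsWalk A a (v :: p) b)
    (hnot : ∀ w ∈ S, w ∉ W → ¬ HasBypass A S a w ∧ ¬ HasBypass A S w b)
    (huS : u ∈ S) (huW : u ∉ W) :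
    2 * W.card + 2 < ∑ w ∈ W, (arcCount A u w + arcCount A v w) := by
  have hv : v ∉ S := hp v List.mem_cons_self
  obtain ⟨hau, hub⟩ := hnot u huS huW
  refine h.lt_sum_arcCount (ne_of_mem_of_not_mem huS hv)
    (fun w hw => ⟨ne_of_mem_of_not_mem hw huW, ne_of_mem_of_not_mem (hWS w hw) hv⟩)
    (arcCount_eq_zero_of_not_hasBypass hp hwalk hau hub) fun w hw => ?_
  by_cases hwS : w ∈ S
  · obtain ⟨haw, hwb⟩ := hnot w hwS hw
    rw [arcCount_comm v, arcCount_eq_zero_of_not_hasBypass hp hwalk haw hwb]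
    exact arcCount_le_two u w
  · exact arcCount_add_arcCount_le_of_not_hasBypass hp hwalk hau hub hwS

lemma MeynielCondition.exists_hasBypass [Std.Irrefl A] (h : MeynielCondition A)
    (hstrong : IsStrong A) {S : Set V} (hS : S.Nontrivial) (hS' : S ≠ Set.univ) :
    ∃ a ∈ S, ∃ b ∈ S, a ≠ b ∧ HasBypass A S a b := by
  by_contra! hno
  obtain ⟨a, ha, b, hb, v, p, hp, hwalk⟩ := hstrong.exists_hasBypass hS.nonempty hS'
  obtain rfl : a = b := by
    by_contra hab
    exact hno a ha b hb hab ⟨v, p, hp, hwalk⟩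
  obtain ⟨u, hu, hua⟩ := hS.exists_ne a
  have hlt := h.lt_sum_arcCount_of_not_hasBypass (W := {a}) (by simpa using ha) hp hwalk
    (fun w hw hwa => by
      rw [Finset.mem_singleton] at hwa
      exact ⟨hno a ha w hw (Ne.symm hwa), hno w hw a ha hwa⟩) hu (by simpa using hua)
  rw [Finset.sum_singleton, Finset.card_singleton] at hlt
  have := arcCount_le_two (A := A) u a
  have := arcCount_le_two (A := A) v a
  omega

end MeynielCondition

section DirectedCycles

/-- A directed cycle as a list of vertices up to rotation, the form in which cycles are cut and
glued. Two distinct vertices are required, so neither the empty cycle nor a loop counts. -/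
structure IsDirectedCycle (A : V → V → Prop) (c : Cycle V) : Prop where
  nodup : c.Nodup
  nontrivial : c.Nontrivial
  chain : c.Chain A

lemma isDirectedCycle_coe_iff {a b : V} {p q : List V} :
    IsDirectedCycle A (a :: (p ++ b :: q) : List V) ↔
      (a :: (p ++ b :: q)).Nodup ∧ IsWalk A a p b ∧ IsWalk A b q a := by
  rw [← isWalk_append_cons]
  refine ⟨fun h => ⟨h.nodup, (Cycle.chain_coe_cons ..).1 h.chain⟩, fun ⟨hnd, hch⟩ => ⟨hnd, ?_, hch⟩⟩
  refine ⟨a, b, ?_, by simp, by simp⟩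
  rintro rfl
  simp at hnd

lemma exists_coe_cons_of_mem {c : Cycle V} {a : V} (ha : a ∈ c) :
    ∃ l : List V, c = (a :: l : List V) := by
  induction c using Quotient.inductionOn' with
  | h l =>
    obtain ⟨s, t, rfl⟩ := List.append_of_mem ha
    exact ⟨t ++ s, Cycle.coe_eq_coe.2 List.isRotated_append⟩

lemma exists_coe_append_cons_of_mem {c : Cycle V} {a b : V} (ha : a ∈ c) (hb : b ∈ c)
    (hab : a ≠ b) : ∃ p q : List V, c = (a :: (p ++ b :: q) : List V) := by
  obtain ⟨l, rfl⟩ := exists_coe_cons_of_mem ha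
  have hbl : b ∈ l := (List.mem_cons.1 hb).resolve_left hab.symm
  obtain ⟨p, q, rfl⟩ := List.append_of_mem hbl
  exact ⟨p, q, rfl⟩

lemma IsStrong.exists_isDirectedCycle [Nontrivial V] (hstrong : IsStrong A) :
    ∃ c, IsDirectedCycle A c := by
  obtain ⟨x, y, hxy⟩ := exists_pair_ne V
  obtain ⟨a, ha, b, hb, v, p, hp, hwalk⟩ := hstrong.exists_hasBypass (Set.singleton_nonempty x)
    ((Set.ne_univ_iff_exists_notMem _).2 ⟨y, by simpa using hxy.symm⟩)
  obtain rfl : a = x := ha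
  obtain rfl : b = a := hb
  obtain ⟨hbv, hvb⟩ := isWalk_cons.1 hwalk
  obtain ⟨q, hqp, hnd, hq⟩ := hvb.exists_nodup
  have hb : b ∉ v :: q := fun hb => hp b (List.cons_subset_cons v hqp hb) rfl
  exact ⟨(b :: ([] ++ v :: q) : List V),
    isDirectedCycle_coe_iff.2 ⟨List.nodup_cons.2 ⟨hb, hnd⟩, by simpa using hbv, hq⟩⟩

lemma exists_maximalFor_isDirectedCycle [Finite V] (h : ∃ c, IsDirectedCycle A c) :
    ∃ c, MaximalFor (IsDirectedCycle A) Cycle.length c := by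
  classical
  have := Fintype.ofFinite V
  have hfin : {c : Cycle V | c.Nodup}.Finite := Finite.of_fintype {c : Cycle V // c.Nodup}
  exact (hfin.subset fun c hc => hc.nodup).exists_maximalFor Cycle.length _ h

lemma IsDirectedCycle.isCycle_get {l : List V} (h : IsDirectedCycle A l) : IsCycle A l.get := by
  refine ⟨(Cycle.length_nontrivial h.nontrivial), h.nodup.injective_get, ?_⟩
  obtain - | ⟨a, t⟩ := l
  · exact fun i => i.elim0
  rintro ⟨i, hi⟩
  have hch : List.IsChain A (a :: t ++ [a]) := (Cycle.chain_coe_cons ..).1 h.chain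
  replace hch := List.isChain_iff_getElem.1 hch i (by simpa using hi)
  rw [List.getElem_append_left hi] at hch
  rcases (Nat.succ_le_of_lt hi).lt_or_eq with hlt | hlast
  · rw [List.getElem_append_left hlt] at hch
    simpa only [Nat.mod_eq_of_lt hlt, List.get_eq_getElem] using hch
  · have ht : i = t.length := by simpa using hlast
    subst ht
    simpa using hch

lemma IsDirectedCycle.isHamiltonian [Fintype V] {c : Cycle V} (h : IsDirectedCycle A c)
    (hall : ∀ w, w ∈ c) : IsHamiltonian A := by
  induction c using Quotient.inductionOn' with
  | h l =>
    have hcard : Fintype.card V = l.length := by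
      classical
      simpa using (Fintype.card_congr (h.nodup.getEquivOfForallMemList l hall)).symm
    rw [IsHamiltonian, hcard]
    exact ⟨l.get, h.isCycle_get, fun w => List.mem_iff_get.1 (hall w)⟩

end DirectedCycles

section LongestCycles

variable {a b : V} {p Q R : List V}

lemma cons_append_cons_perm (a b : V) (Q R : List V) :
    a :: (Q ++ b :: R) ~ Q ++ b :: (R ++ [a]) := by
  simpa using (List.perm_append_comm (l₁ := [a]) (l₂ := Q ++ b :: R))

lemma mem_cons_append_cons {w : V} :
    w ∈ a :: (Q ++ b :: R) ↔ w ∈ Q ∨ w ∈ b :: (R ++ [a]) :=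
  (cons_append_cons_perm a b Q R).mem_iff.trans List.mem_append

lemma nodup_cons_append_cons : (a :: (Q ++ b :: R)).Nodup ↔
    Q.Nodup ∧ (b :: (R ++ [a])).Nodup ∧ Q.Disjoint (b :: (R ++ [a])) :=
  (cons_append_cons_perm a b Q R).nodup_iff.trans List.nodup_append'

lemma sum_arcCount_le_of_maximalFor
    (hc : MaximalFor (IsDirectedCycle A) Cycle.length (a :: (Q ++ b :: R) : List V)) {v : V}
    (hv : v ∉ a :: (Q ++ b :: R)) :
    ((b :: (R ++ [a])).map (arcCount A v)).sum ≤ R.length + 3 := by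
  obtain ⟨hnd, hQ, hR⟩ := isDirectedCycle_coe_iff.1 hc.1
  by_contra! hlt
  obtain ⟨R', hperm, hR'⟩ := hR.exists_insert hlt
  have hcons : a :: (Q ++ b :: R') ~ v :: a :: (Q ++ b :: R) := calc
    a :: (Q ++ b :: R') ~ Q ++ b :: (R' ++ [a]) := cons_append_cons_perm ..
    _ ~ Q ++ v :: b :: (R ++ [a]) := hperm.append_left Q
    _ ~ v :: (Q ++ b :: (R ++ [a])) := List.perm_middle
    _ ~ v :: a :: (Q ++ b :: R) := (cons_append_cons_perm ..).symm.cons v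
  have hc' : IsDirectedCycle A (a :: (Q ++ b :: R') : List V) :=
    isDirectedCycle_coe_iff.2 ⟨hcons.nodup_iff.2 (List.nodup_cons.2 ⟨hv, hnd⟩), hQ, hR'⟩
  have hlen : (a :: (Q ++ b :: R')).length = (a :: (Q ++ b :: R)).length + 1 := hcons.length_eq
  exact (hc.not_prop_of_gt (by simp [hlen])) hc'

lemma exists_longest_path [Finite V]
    (hc : IsDirectedCycle A (a :: (Q ++ b :: R) : List V)) :
    ∃ m, MaximalFor (fun m => (b :: (m ++ [a])).Nodup ∧ IsWalk A b m a ∧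
      b :: (R ++ [a]) ⊆ b :: (m ++ [a]) ∧ b :: (m ++ [a]) ⊆ a :: (Q ++ b :: R)) List.length m := by
  classical
  have := Fintype.ofFinite V
  obtain ⟨hnd, -, hR⟩ := isDirectedCycle_coe_iff.1 hc
  have hfin : {m : List V | m.Nodup}.Finite := Finite.of_fintype {m : List V // m.Nodup}
  refine (hfin.subset fun m hm => ?_).exists_maximalFor List.length _ ⟨R, ?_⟩
  · exact (List.nodup_cons.1 hm.1).2.of_append_left
  · exact ⟨(nodup_cons_append_cons.1 hnd).2.1, hR, List.Subset.refl _,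
      fun w hw => mem_cons_append_cons.2 (.inr hw)⟩

lemma exists_saturated_path [Finite V]
    (hc : MaximalFor (IsDirectedCycle A) Cycle.length (a :: (Q ++ b :: R) : List V))
    (hp₀ : p ≠ []) (hpnd : p.Nodup) (hp : ∀ w ∈ p, w ∉ a :: (Q ++ b :: R))
    (hwalk : IsWalk A a p b) :
    ∃ m, (b :: (m ++ [a])).Nodup ∧ b :: (R ++ [a]) ⊆ b :: (m ++ [a]) ∧
      b :: (m ++ [a]) ⊆ a :: (Q ++ b :: R) ∧ ∃ u ∈ Q, u ∉ b :: (m ++ [a]) ∧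
        ((b :: (m ++ [a])).map (arcCount A u)).sum ≤ m.length + 3 := by
  obtain ⟨m, ⟨hnd, hm, hRm, hmc⟩, hmax⟩ := exists_longest_path hc.1
  have hpm : IsDirectedCycle A (a :: (p ++ b :: m) : List V) :=
    isDirectedCycle_coe_iff.2 ⟨nodup_cons_append_cons.2
      ⟨hpnd, hnd, fun w hwp hwm => hp w hwp (hmc hwm)⟩, hwalk, hm⟩
  have hshort : p.length + m.length ≤ Q.length + R.length := by
    have hle := not_lt.1 fun hgt => hc.not_prop_of_gt hgt hpm
    simp only [Cycle.length_coe, List.length_cons, List.length_append] at hle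
    omega
  obtain ⟨u, huc, hum⟩ : ∃ u ∈ a :: (Q ++ b :: R), u ∉ b :: (m ++ [a]) := by
    by_contra! hcm
    have hle := ((isDirectedCycle_coe_iff.1 hc.1).1.subperm hcm).length_le
    have := List.length_pos_iff.2 hp₀
    simp only [List.length_cons, List.length_append, List.length_nil] at hle
    omega
  have huQ : u ∈ Q := (mem_cons_append_cons.1 huc).resolve_right fun h => hum (hRm h)
  refine ⟨m, hnd, hRm, hmc, u, huQ, hum, ?_⟩
  by_contra! hlt
  obtain ⟨m', hperm, hm'⟩ := hm.exists_insert hlt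
  have hlen : m'.length = m.length + 1 := by simpa using hperm.length_eq
  have hmem : ∀ w, w ∈ b :: (m' ++ [a]) ↔ w = u ∨ w ∈ b :: (m ++ [a]) := fun w =>
    hperm.mem_iff.trans List.mem_cons
  refine absurd (hmax ⟨hperm.nodup_iff.2 (List.nodup_cons.2 ⟨hum, hnd⟩), hm', ?_, ?_⟩ ?_) ?_
  · exact fun w hw => (hmem w).2 (.inr (hRm hw))
  · intro w hw
    obtain rfl | hwm := (hmem w).1 hw
    exacts [huc, hmc hwm]
  all_goals omega

lemma not_hasBypass_of_forall_mem [Fintype V] [Std.Irrefl A] (h : MeynielCondition A)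
    (hc : MaximalFor (IsDirectedCycle A) Cycle.length (a :: (Q ++ b :: R) : List V))
    (hQ : ∀ u ∈ Q, ¬ HasBypass A {w | w ∈ a :: (Q ++ b :: R)} a u ∧
      ¬ HasBypass A {w | w ∈ a :: (Q ++ b :: R)} u b) :
    ¬ HasBypass A {w | w ∈ a :: (Q ++ b :: R)} a b := by
  classical
  rintro ⟨v, p, hp, hwalk⟩
  have hv := hp v List.mem_cons_self
  obtain ⟨hav, hvb⟩ := isWalk_cons.1 hwalk
  obtain ⟨p', hsub, hpnd, hpath⟩ := hvb.exists_nodup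
  obtain ⟨m, hmnd, hRm, hmc, u, huQ, hum, hsumu⟩ := exists_saturated_path hc
    (List.cons_ne_nil v p') hpnd (fun w hw => hp w (List.cons_subset_cons v hsub hw))
    (isWalk_cons.2 ⟨hav, hpath⟩)
  have hRnd : (b :: (R ++ [a])).Nodup :=
    (nodup_cons_append_cons.1 (isDirectedCycle_coe_iff.1 hc.1).1).2.1
  have hsumv := sum_arcCount_le_of_maximalFor hc hv
  have hlen : R.length ≤ m.length := by simpa using (hRnd.subperm hRm).length_le
  have hcard : (b :: (m ++ [a])).toFinset.card = m.length + 2 := by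
    rw [List.toFinset_card_of_nodup hmnd]
    simp
  have hvR : ∑ w ∈ (b :: (R ++ [a])).toFinset, arcCount A v w =
      ∑ w ∈ (b :: (m ++ [a])).toFinset, arcCount A v w := by
    have hsubset : (b :: (R ++ [a])).toFinset ⊆ (b :: (m ++ [a])).toFinset := fun w hw =>
      List.mem_toFinset.2 (hRm (List.mem_toFinset.1 hw))
    refine Finset.sum_subset hsubset fun w hwm hwR => ?_
    rw [List.mem_toFinset] at hwm hwR
    obtain ⟨haw, hwb⟩ := hQ w ((mem_cons_append_cons.1 (hmc hwm)).resolve_right hwR)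
    rw [arcCount_comm, arcCount_eq_zero_of_not_hasBypass hp hwalk haw hwb]
  have hlt := h.lt_sum_arcCount_of_not_hasBypass (u := u) (W := (b :: (m ++ [a])).toFinset)
    (fun w hw => hmc (List.mem_toFinset.1 hw)) hp hwalk
    (fun w hw hwm => hQ w ((mem_cons_append_cons.1 hw).resolve_right fun hwR =>
      hwm (List.mem_toFinset.2 (hRm hwR))))
    (mem_cons_append_cons.2 (.inl huQ)) (by rwa [List.mem_toFinset])
  rw [Finset.sum_add_distrib, ← hvR, List.sum_toFinset (arcCount A u) hmnd,
    List.sum_toFinset (arcCount A v) hRnd, hcard] at hlt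
  omega

lemma not_hasBypass_of_maximalFor [Fintype V] [Std.Irrefl A] (h : MeynielCondition A) {c : Cycle V}
    (hc : MaximalFor (IsDirectedCycle A) Cycle.length c) (ha : a ∈ c) (hb : b ∈ c) (hab : a ≠ b) :
    ¬ HasBypass A {w | w ∈ c} a b := by
  obtain ⟨Q, R, hcQ⟩ := exists_coe_append_cons_of_mem ha hb hab
  clear ha hb hab
  induction hk : Q.length using Nat.strong_induction_on generalizing a b Q R with
  | _ k ih =>
    have hQ : ∀ u ∈ Q, ¬ HasBypass A {w | w ∈ c} a u ∧ ¬ HasBypass A {w | w ∈ c} u b := by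
      intro u hu
      obtain ⟨Q₁, Q₂, rfl⟩ := List.append_of_mem hu
      rw [List.length_append, List.length_cons] at hk
      have hrot : c = (u :: (Q₂ ++ b :: (R ++ a :: Q₁)) : List V) := by
        rw [hcQ]
        simpa using List.isRotated_append (l := a :: Q₁) (l' := u :: (Q₂ ++ b :: R))
      exact ⟨ih Q₁.length (by omega) Q₁ (Q₂ ++ b :: R) (by simpa using hcQ) rfl,
        ih Q₂.length (by omega) Q₂ (R ++ a :: Q₁) hrot rfl⟩
    subst hcQ
    exact not_hasBypass_of_forall_mem h hc hQ

end LongestCycles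

/-- **Meyniel's theorem**. -/
theorem statement9_general [Fintype V] [Nontrivial V] [Std.Irrefl A] (hstrong : IsStrong A)
    (hdeg : MeynielCondition A) : IsHamiltonian A := by
  obtain ⟨c, hc⟩ := exists_maximalFor_isDirectedCycle hstrong.exists_isDirectedCycle
  refine hc.prop.isHamiltonian ?_
  by_contra hall
  obtain ⟨x, y, hxy, hx, hy⟩ := hc.prop.nontrivial
  obtain ⟨a, ha, b, hb, hab, hbypass⟩ := hdeg.exists_hasBypass (S := {w | w ∈ c}) hstrong
    ⟨x, hx, y, hy, hxy⟩ fun huniv => hall (Set.eq_univ_iff_forall.1 huniv)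
  exact not_hasBypass_of_maximalFor hdeg hc ha hb hab hbypass

end Meyniel

/-- Goldberg, Levitskaya, Satanovskyi: let `D` be a strong digraph of order `n ≥ 2`.
If `n - 1` vertices of `D` have degree at least `n` and the remaining vertex has
degree at least `n - 1`, then `D` is Hamiltonian. -/
theorem statement9 {V : Type*} [Fintype V] [DecidableEq V] (A : V → V → Prop)
    (hirr : Irreflexive A)
    (n : ℕ) (hn2 : 2 ≤ n) (hcard : Fintype.card V = n)
    (hstrong : IsStrong A)
    (z : V)
    (hdeg : ∀ v : V, v ≠ z → n ≤ degree A v)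
    (hdegz : n - 1 ≤ degree A z) :
    IsHamiltonian A := by
  subst hcard
  have : Nontrivial V := Fintype.one_lt_card_iff_nontrivial.1 hn2
  have : Std.Irrefl A := ⟨hirr⟩
  exact statement9_general hstrong (.of_card_le_degree hdeg hdegz)
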